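/- For p ∈ [0,1] and r : ℝ, define the lifting δ^{p,r} for the functor X ↦ D (ℝ × X) by δ^{p,r} X U = { d ∈ D (ℝ × X) | ∑ over those pairs (r, u) in d.support with u ∈ U of d (r, u) = p }. The family (δ^{p,r})_{p ∈ [0,1], r ∈ ℝ} is separating for the functor X ↦ D (ℝ × X). -/

import Mathlib

open CategoryTheory
open scoped NNReal Classical

universe u v

/-- A family of predicate liftings is separating if any two distinct elements of `F.obj X`
are distinguished by some lifting applied to some subset. -/
def IsSeparating (F : Type u ⥤ Type u) {ι : Type v}
    (Λ : ι → (X : Type u) → Set X → Set (F.obj X)) : Prop :=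
  ∀ (X : Type u) (x y : F.obj X), x ≠ y →
    ∃ (i : ι) (U : Set X), Xor' (x ∈ Λ i X U) (y ∈ Λ i X U)

/-- The finite distribution functor `D : Type u ⥤ Type u`. -/
noncomputable def DistFunctor : Type u ⥤ Type u where
  obj X := { d : X →₀ ℝ≥0 // ∑ x ∈ d.support, d x = 1 }
  map f := ↾fun d => ⟨Finsupp.mapDomain f d.1, by
    have h : (Finsupp.mapDomain f d.1).sum (fun _ v => v) = d.1.sum (fun _ v => v) :=
      Finsupp.sum_mapDomain_index (fun _ => rfl) (fun _ _ _ => rfl)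
    simpa [Finsupp.sum] using h.trans (by simpa [Finsupp.sum] using d.2)⟩
  map_id X := by
    refine ConcreteCategory.hom_ext _ _ fun d => ?_
    exact Subtype.ext Finsupp.mapDomain_id
  map_comp f g := by
    refine ConcreteCategory.hom_ext _ _ fun d => ?_
    exact Subtype.ext (Finsupp.mapDomain_comp (v := d.1) (f := f) (g := g))

/-- The functor `X ↦ D (ℝ × X)`, acting on `f` via `Finsupp.mapDomain (Prod.map id f)`. -/
noncomputable def DRFunctor : Type u ⥤ Type u where
  obj X := DistFunctor.obj (ℝ × X)
  map {X Y} f := DistFunctor.map (↾(Prod.map id f : ℝ × X → ℝ × Y))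
  map_id X := DistFunctor.map_id (ℝ × X)
  map_comp {X Y Z} f g :=
    DistFunctor.map_comp (↾(Prod.map id f : ℝ × X → ℝ × Y)) (↾(Prod.map id g : ℝ × Y → ℝ × Z))

/-- `δ^{p,r}`: distributions on `ℝ × X` whose mass on pairs `(r, u)` with `u ∈ U` is `p`. -/
noncomputable def dreqLifting (p : ℝ≥0) (r : ℝ) (X : Type u) (U : Set X) :
    Set (DRFunctor.obj X) :=
  { d | ∑ z ∈ d.1.support.filter (fun z => z.1 = r ∧ z.2 ∈ U), d.1 z = p }

/-!
A distribution is determined by its point masses, and the mass at `(r, a)` is its mass on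
`{r} × {a}`, so singleton subsets already suffice.
-/

theorem DistFunctor.apply_le_one {X : Type u} (d : DistFunctor.obj X) (z : X) : d.1 z ≤ 1 :=
  (Finsupp.le_degree z d.1).trans_eq d.2

theorem DistFunctor.exists_apply_ne {X : Type u} {d e : DistFunctor.obj X} (h : d ≠ e) :
    ∃ z, d.1 z ≠ e.1 z :=
  DFunLike.ne_iff.mp (Subtype.coe_ne_coe.mpr h)

theorem sum_support_filter_eq {α M : Type*} [AddCommMonoid M] (d : α →₀ M) (z : α)
    [DecidablePred (· = z)] : ∑ w ∈ d.support with w = z, d w = d z := by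
  rw [Finset.sum_filter, Finset.sum_eq_single z (fun _ _ hw => if_neg hw), if_pos rfl]
  exact fun hz => (if_pos rfl).trans (Finsupp.notMem_support_iff.mp hz)

theorem mem_dreqLifting_singleton {X : Type u} {p : ℝ≥0} {r : ℝ} {a : X} {d : DRFunctor.obj X} :
    d ∈ dreqLifting p r X {a} ↔ d.1 (r, a) = p := by
  have hpair (z : ℝ × X) : z.1 = r ∧ z.2 ∈ ({a} : Set X) ↔ z = (r, a) := by
    rw [Set.mem_singleton_iff, Prod.ext_iff]
  simp only [dreqLifting, Set.mem_ofPred_eq, hpair, sum_support_filter_eq]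

/-- The family `(δ^{p,r})_{p ∈ [0,1], r ∈ ℝ}` is separating for `X ↦ D (ℝ × X)`. -/
theorem dreqLifting_isSeparating :
    IsSeparating DRFunctor.{u}
      (fun (q : Set.Icc (0 : ℝ≥0) 1 × ℝ) (X : Type u) (U : Set X) =>
        dreqLifting q.1.1 q.2 X U) := by
  intro X x y hxy
  obtain ⟨⟨r, a⟩, hne⟩ := DistFunctor.exists_apply_ne hxy
  have hx : x ∈ dreqLifting (x.1 (r, a)) r X {a} := mem_dreqLifting_singleton.mpr rfl
  have hy : y ∉ dreqLifting (x.1 (r, a)) r X {a} := fun h =>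
    hne (mem_dreqLifting_singleton.mp h).symm
  have hp : x.1 (r, a) ∈ Set.Icc (0 : ℝ≥0) 1 := ⟨zero_le, DistFunctor.apply_le_one x (r, a)⟩
  exact ⟨(⟨x.1 (r, a), hp⟩, r), {a}, Or.inl ⟨hx, hy⟩⟩
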